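/- Fix a positive integer n, let C₁ > 1 and f₁ : P(3) → P(3) be as constructed from the flow of the cut-off vector field (so that f₁(G) = G'), and set N_n(G') = f₁(P(1/(100C₁n))) and, for integers i, j ∈ [−n, n], let N_n(G'_{i,j}) be the horizontal translate of N_n(G') by (i/n, j/n, 0). Then there exists a constant C₂ > 1 independent of n such that for any integers i, j ∈ [−n, n] there exists a smooth C₂-bi-Lipschitz homeomorphism f_{2,i,j} : P(3) → P(3) that restricts to the identity on ∂_ver P(3), maps G' onto G'_{i,j}, and maps N_n(G') onto N_n(G'_{i,j}) (its restriction to N_n(G') being the horizontal translation by (i/n, j/n, 0)). -/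

import Mathlib

noncomputable section

open Set Metric

/-- Euclidean 3-space. -/
abbrev R3 : Type := EuclideanSpace ℝ (Fin 3)

/-- The point `(a, b, c)` of `ℝ³`. -/
noncomputable def mk3 (a b c : ℝ) : R3 := (WithLp.equiv 2 (Fin 3 → ℝ)).symm ![a, b, c]

/-- The `Y`-shaped solid `P(r) ⊂ ℝ³`. -/
def Pset (r : ℝ) : Set R3 :=
  {p | ((p 0) ^ 2 + (p 1) ^ 2 ≤ r ^ 2 ∧ 0 ≤ p 2 ∧ p 2 ≤ 8) ∨
       ((p 0) ^ 2 + (p 1 + p 2) ^ 2 ≤ r ^ 2 ∧ -8 ≤ p 2 ∧ p 2 ≤ 0) ∨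
       ((p 0) ^ 2 + (p 1 - p 2) ^ 2 ≤ r ^ 2 ∧ -8 ≤ p 2 ∧ p 2 ≤ 0)}

/-- The closed horizontal `r`-neighborhood `N^hor_r(S)` of a subset `S ⊂ ℝ³`. -/
def Nhor (r : ℝ) (S : Set R3) : Set R3 :=
  {p | ∃ q ∈ S, q 2 = p 2 ∧ (p 0 - q 0) ^ 2 + (p 1 - q 1) ^ 2 ≤ r ^ 2}

/-- The `Y`-shaped graph `G = ⋂_{r>0} P(r)`. -/
def Ggraph : Set R3 :=
  {p | (p 0 = 0 ∧ p 1 = 0 ∧ 0 ≤ p 2 ∧ p 2 ≤ 8) ∨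
       (∃ ε : ℝ, (ε = 1 ∨ ε = -1) ∧
         p 0 = 0 ∧ p 1 = ε * p 2 ∧ -8 ≤ p 2 ∧ p 2 ≤ 0)}

/-- The perturbed `Y`-shaped graph `G' ⊂ P(3)` (depending on the positive integer `n`). -/
def Ggraph' (n : ℕ) : Set R3 :=
  {p | (p 0 = 0 ∧ p 1 = 0 ∧ 0 ≤ p 2 ∧ p 2 ≤ 8) ∨
       (∃ ε : ℝ, (ε = 1 ∨ ε = -1) ∧
         p 0 = ε * p 2 ∧ p 1 = 0 ∧ -(1 / (10 * (n : ℝ))) ≤ p 2 ∧ p 2 ≤ 0) ∨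
       (∃ ε : ℝ, (ε = 1 ∨ ε = -1) ∧
         p 0 = -ε / (10 * (n : ℝ)) ∧ p 1 = ε * (p 2 + 1 / (10 * (n : ℝ))) ∧
         -8 ≤ p 2 ∧ p 2 ≤ -(1 / (10 * (n : ℝ))))}

/-- Horizontal translation of a subset of `ℝ³` by the vector `(a, b, 0)`. -/
def translateH (a b : ℝ) (S : Set R3) : Set R3 :=
  {p | ∃ q ∈ S, p 0 = q 0 + a ∧ p 1 = q 1 + b ∧ p 2 = q 2}

/-- The translate `G'_{i,j}` of `G'` by the horizontal vector `(i/n, j/n, 0)`. -/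
def Gij (n : ℕ) (i j : ℤ) : Set R3 :=
  translateH ((i : ℝ) / (n : ℝ)) ((j : ℝ) / (n : ℝ)) (Ggraph' n)

/-- (The interior of) the horizontal boundary disk `D₁` of `P(3)`. -/
def D1int : Set R3 := {p | p 2 = 8 ∧ (p 0) ^ 2 + (p 1) ^ 2 < 9}

/-- (The interior of) the horizontal boundary disk `D₂` of `P(3)`. -/
def D2int : Set R3 := {p | p 2 = -8 ∧ (p 0) ^ 2 + (p 1 - 8) ^ 2 < 9}

/-- (The interior of) the horizontal boundary disk `D₃` of `P(3)`. -/
def D3int : Set R3 := {p | p 2 = -8 ∧ (p 0) ^ 2 + (p 1 + 8) ^ 2 < 9}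

/-- The vertical boundary `∂_ver P(3)`: the boundary of `P(3)` minus the interiors of the
three horizontal disks `D₁, D₂, D₃`. -/
def verBoundary : Set R3 := frontier (Pset 3) \ (D1int ∪ D2int ∪ D3int)

end

noncomputable section

/-- The squared horizontal distance to the (vertically extended) graph `G`. -/
def gaugeY (p : R3) : ℝ := (p 0) ^ 2 + (|p 1| + min (p 2) 0) ^ 2

lemma continuous_gaugeY : Continuous gaugeY := by
  unfold gaugeY
  fun_prop

lemma mem_Pset_iff {r : ℝ} {p : R3} :
    p ∈ Pset r ↔ gaugeY p ≤ r ^ 2 ∧ -8 ≤ p 2 ∧ p 2 ≤ 8 := by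
  simp only [Pset, gaugeY, Set.mem_ofPred_eq]
  rcases le_total (p 2) 0 with hz | hz
  · rw [min_eq_left hz]
    rcases abs_cases (p 1) with ⟨h, h'⟩ | ⟨h, h'⟩ <;> rw [h]
    · constructor
      · rintro (⟨h1, h2, h3⟩ | ⟨h1, h2, h3⟩ | ⟨h1, h2, h3⟩)
        · have : p 2 = 0 := le_antisymm hz h2
          rw [this]; refine ⟨?_, ?_, ?_⟩ <;> nlinarith
        · exact ⟨h1, h2, by linarith⟩
        · refine ⟨?_, h2, by linarith⟩
          nlinarith
      · rintro ⟨h1, h2, h3⟩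
        exact Or.inr (Or.inl ⟨h1, h2, hz⟩)
    · constructor
      · rintro (⟨h1, h2, h3⟩ | ⟨h1, h2, h3⟩ | ⟨h1, h2, h3⟩)
        · have : p 2 = 0 := le_antisymm hz h2
          rw [this]; refine ⟨?_, ?_, ?_⟩ <;> nlinarith
        · refine ⟨?_, h2, by linarith⟩
          nlinarith
        · exact ⟨by nlinarith, h2, by linarith⟩
      · rintro ⟨h1, h2, h3⟩
        exact Or.inr (Or.inr ⟨by nlinarith, h2, hz⟩)
  · rw [min_eq_right hz, add_zero, sq_abs]
    constructor
    · rintro (⟨h1, h2, h3⟩ | ⟨h1, h2, h3⟩ | ⟨h1, h2, h3⟩)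
      · exact ⟨h1, by linarith, h3⟩
      · have : p 2 = 0 := le_antisymm h3 hz
        rw [this, add_zero] at h1; exact ⟨h1, h2, by linarith⟩
      · have : p 2 = 0 := le_antisymm h3 hz
        rw [this, sub_zero] at h1; exact ⟨h1, h2, by linarith⟩
    · rintro ⟨h1, h2, h3⟩
      exact Or.inl ⟨h1, hz, h3⟩

/-- The open support region. -/
def Ureg : Set R3 := {p | gaugeY p < 9 ∧ |p 2| < 9}

/-- The closed region on which the cut-off function is `1`. -/
def Kreg : Set R3 := {p | gaugeY p ≤ 4 ∧ |p 2| ≤ 8}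

lemma isOpen_Ureg : IsOpen Ureg :=
  (isOpen_lt continuous_gaugeY continuous_const).inter
    (isOpen_lt (by fun_prop : Continuous fun p : R3 => |p 2|) continuous_const)

lemma isClosed_Kreg : IsClosed Kreg :=
  (isClosed_le continuous_gaugeY continuous_const).inter
    (isClosed_le (by fun_prop : Continuous fun p : R3 => |p 2|) continuous_const)

lemma Kreg_subset_Ureg : Kreg ⊆ Ureg := fun _ hp =>
  ⟨lt_of_le_of_lt hp.1 (by norm_num), lt_of_le_of_lt hp.2 (by norm_num)⟩

lemma Ureg_subset_ball : Ureg ⊆ Metric.closedBall 0 30 := by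
  rintro p ⟨h1, h2⟩
  rw [mem_closedBall_zero_iff, EuclideanSpace.norm_eq, Real.sqrt_le_left (by norm_num)]
  simp only [Fin.sum_univ_three, Real.norm_eq_abs, sq_abs]
  unfold gaugeY at h1
  have h3 : |p 1| + min (p 2) 0 ≤ 3 := by nlinarith [sq_nonneg (p 0)]
  have h4 : -9 ≤ min (p 2) 0 := le_min (by linarith [(abs_lt.1 h2).1]) (by norm_num)
  have h5 : |p 1| ≤ 12 := by linarith
  have h6 : (p 1) ^ 2 ≤ 12 ^ 2 := by rw [← sq_abs]; gcongr
  have h7 : (p 2) ^ 2 ≤ 9 ^ 2 := by rw [← sq_abs]; gcongr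
  nlinarith [sq_nonneg (|p 1| + min (p 2) 0)]

lemma exists_cutoff : ∃ (χ : R3 → ℝ) (L : NNReal), ContDiff ℝ (⊤ : ℕ∞) χ ∧ LipschitzWith L χ ∧
    (∀ p, p ∉ Ureg → χ p = 0) ∧ (∀ p ∈ Kreg, χ p = 1) ∧ ∀ p, 0 ≤ χ p ∧ χ p ≤ 1 := by
  obtain ⟨χ, h0, h1, h01⟩ := exists_contMDiffMap_zero_one_of_isClosed
    (n := (⊤ : ℕ∞)) (modelWithCornersSelf ℝ R3)
    isOpen_Ureg.isClosed_compl isClosed_Kreg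
    (Set.disjoint_left.2 fun p hp hk => hp (Kreg_subset_Ureg hk))
  have hs : ContDiff ℝ (⊤ : ℕ∞) χ := χ.contMDiff.contDiff
  have hc : HasCompactSupport χ := by
    refine HasCompactSupport.of_support_subset_isCompact (isCompact_closedBall (0 : R3) 30) ?_
    intro p hp
    by_contra hn
    exact hp (h0 fun hU => hn (Ureg_subset_ball hU))
  obtain ⟨L, hL⟩ := ContDiff.lipschitzWith_of_hasCompactSupport hc hs (by simp)
  exact ⟨χ, L, hs, hL, fun p hp => h0 hp, fun p hp => h1 hp, h01⟩

lemma Ureg_inter_verBoundary {p : R3} (hp : p ∈ verBoundary) : p ∉ Ureg := by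
  rintro ⟨hg, -⟩
  obtain ⟨hfr, hD⟩ := hp
  have hcl : IsClosed (Pset 3) := by
    have : Pset 3 = {p : R3 | gaugeY p ≤ 3 ^ 2} ∩ ({p | -8 ≤ p 2} ∩ {p | p 2 ≤ 8}) := by
      ext q; exact mem_Pset_iff
    rw [this]
    exact (isClosed_le continuous_gaugeY continuous_const).inter
      ((isClosed_le continuous_const (by fun_prop : Continuous fun p : R3 => p 2)).inter
        (isClosed_le (by fun_prop : Continuous fun p : R3 => p 2) continuous_const))
  have hP : p ∈ Pset 3 := hcl.frontier_subset hfr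
  obtain ⟨-, h1, h2⟩ := mem_Pset_iff.1 hP
  apply hD
  rcases h1.eq_or_lt with h1 | h1
  · have hz : min (p 2) 0 = -8 := by rw [← h1]; norm_num
    simp only [gaugeY, hz] at hg
    rcases abs_cases (p 1) with ⟨h, h'⟩ | ⟨h, h'⟩ <;> rw [h] at hg
    · exact Or.inl (Or.inr ⟨h1.symm, by nlinarith⟩)
    · exact Or.inr ⟨h1.symm, by nlinarith⟩
  rcases h2.eq_or_lt with h2 | h2
  · have hz : min (p 2) 0 = 0 := by rw [h2]; norm_num
    simp only [gaugeY, hz, add_zero, sq_abs] at hg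
    exact Or.inl (Or.inl ⟨h2, hg⟩)
  exfalso
  refine hfr.2 (mem_interior.2 ⟨{q : R3 | gaugeY q < 9} ∩ ({q | -8 < q 2} ∩ {q | q 2 < 8}), ?_, ?_,
    hg, h1, h2⟩)
  · rintro q ⟨a, b, c⟩
    exact mem_Pset_iff.2 ⟨by norm_num; exact le_of_lt a, le_of_lt b, le_of_lt c⟩
  · exact (isOpen_lt continuous_gaugeY continuous_const).inter
      ((isOpen_lt continuous_const (by fun_prop : Continuous fun p : R3 => p 2)).inter
        (isOpen_lt (by fun_prop : Continuous fun p : R3 => p 2) continuous_const))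

@[simp] lemma mk3_0 (a b c : ℝ) : mk3 a b c 0 = a := rfl
@[simp] lemma mk3_1 (a b c : ℝ) : mk3 a b c 1 = b := rfl
@[simp] lemma mk3_2 (a b c : ℝ) : mk3 a b c 2 = c := rfl

lemma R3_ext {p q : R3} (h0 : p 0 = q 0) (h1 : p 1 = q 1) (h2 : p 2 = q 2) : p = q := by
  ext i; fin_cases i <;> assumption

/-- Points of the neighbourhood of `G'` stay in the good region when translated. -/
lemma translate_mem_Kreg {n : ℕ} (hn : 0 < n) {p : R3}
    (hp : p ∈ Nhor (1 / (100 * (n : ℝ))) (Ggraph' n)) {s t : ℝ} (hs : |s| ≤ 1) (ht : |t| ≤ 1) :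
    p + mk3 s t 0 ∈ Kreg := by
  obtain ⟨q, hq, hz, hd⟩ := hp
  have hn1 : (1 : ℝ) ≤ n := by exact_mod_cast hn
  have e1 : (1 : ℝ) / (100 * n) = (1 / n) / 100 := by field_simp
  have e2 : (1 : ℝ) / (10 * n) = (1 / n) / 10 := by field_simp
  have e3 : ∀ ε : ℝ, -ε / (10 * n) = -ε * ((1 / n) / 10) := by intro ε; field_simp
  simp only [Ggraph', Set.mem_ofPred_eq, e2, e3] at hq
  rw [e1] at hd
  have hd0 : (0 : ℝ) < 1 / n := by positivity
  have hd1 : (1 : ℝ) / n ≤ 1 := by rw [div_le_one (by linarith)]; exact hn1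
  generalize (1 : ℝ) / n = d at *
  have hx : |p 0 - q 0| ≤ d / 100 := abs_le_of_sq_le_sq (by nlinarith [sq_nonneg (p 1 - q 1)])
    (by linarith)
  have hy : |p 1 - q 1| ≤ d / 100 := abs_le_of_sq_le_sq (by nlinarith [sq_nonneg (p 0 - q 0)])
    (by linarith)
  have key : |q 0| ≤ d / 10 ∧ |(|q 1| + min (q 2) 0)| ≤ d / 10 ∧ |q 2| ≤ 8 := by
    rcases hq with ⟨h0, h1, h2, h3⟩ | ⟨ε, hε, h0, h1, h2, h3⟩ | ⟨ε, hε, h0, h1, h2, h3⟩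
    · rw [h0, h1, min_eq_right h2, abs_of_nonneg h2]
      simp only [abs_zero, add_zero]
      exact ⟨by linarith, by linarith, h3⟩
    · have hq2 : |q 2| ≤ d / 10 := abs_le.2 ⟨by linarith, by linarith⟩
      rw [h0, h1, min_eq_left h3]
      simp only [abs_zero, zero_add]
      refine ⟨?_, hq2, by linarith⟩
      rcases hε with rfl | rfl <;> simpa using hq2
    · have hneg : q 2 ≤ 0 := by linarith
      have ha : |ε| = 1 := by rcases hε with rfl | rfl <;> simp
      rw [h0, h1, min_eq_left hneg, abs_mul, abs_mul, abs_neg, ha,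
        abs_of_nonneg (by linarith : (0 : ℝ) ≤ d / 10),
        abs_of_nonpos (by linarith : q 2 + d / 10 ≤ 0)]
      refine ⟨by linarith, abs_le.2 ⟨by linarith, by linarith⟩, abs_le.2 ⟨h2, by linarith⟩⟩
  obtain ⟨k0, k1, k2⟩ := key
  rw [hz] at k1 k2
  have hX : |p 0 + s| ≤ 5 / 4 := by
    rw [abs_le] at *
    constructor <;> linarith [hx.1, hx.2, k0.1, k0.2, hs.1, hs.2]
  have hYY : |(|p 1 + t| - |q 1|)| ≤ d / 100 + 1 := by
    refine (abs_abs_sub_abs_le_abs_sub _ _).trans ?_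
    rw [show p 1 + t - q 1 = (p 1 - q 1) + t by ring]
    exact (abs_add_le _ _).trans (by linarith)
  have hY : |(|p 1 + t| + min (p 2) 0)| ≤ 5 / 4 := by
    rw [show |p 1 + t| + min (p 2) 0 = (|p 1 + t| - |q 1|) + (|q 1| + min (p 2) 0) by ring]
    exact (abs_add_le _ _).trans (by linarith)
  have hX2 := sq_le_sq' (abs_le.1 hX).1 (abs_le.1 hX).2
  have hY2 := sq_le_sq' (abs_le.1 hY).1 (abs_le.1 hY).2
  refine ⟨?_, ?_⟩
  · simp only [gaugeY, PiLp.add_apply, mk3_0, mk3_1, mk3_2, add_zero]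
    linarith
  · simpa using k2

/-- One small step. -/
lemma step_props {χ : R3 → ℝ} {L : NNReal} (hs : ContDiff ℝ (⊤ : ℕ∞) χ) (hL : LipschitzWith L χ)
    (h0 : ∀ p, p ∉ Ureg → χ p = 0) (h01 : ∀ p, 0 ≤ χ p ∧ χ p ≤ 1)
    {w : R3} (hw2 : w 2 = 0) (hw : L * ‖w‖ ≤ 1 / 2) {f : R3 → R3}
    (hf : ∀ p, f p = p + χ p • w) :
    ContDiff ℝ (⊤ : ℕ∞) f ∧ Set.BijOn f (Pset 3) (Pset 3) ∧
    (∀ u v, dist (f u) (f v) ≤ 2 * dist u v) ∧ (∀ u v, dist u v ≤ 2 * dist (f u) (f v)) ∧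
    (∀ p, p ∉ Ureg → f p = p) := by
  have hfun : f = fun p => p + χ p • w := funext hf
  have hdiff : ∀ u v, ‖(χ u - χ v) • w‖ ≤ 1 / 2 * dist u v := by
    intro u v
    rw [norm_smul, ← dist_eq_norm]
    have := hL.dist_le_mul u v
    calc dist (χ u) (χ v) * ‖w‖ ≤ (L * dist u v) * ‖w‖ := by gcongr
      _ = (L * ‖w‖) * dist u v := by ring
      _ ≤ _ := by gcongr
  have hsub : ∀ u v, f u - f v = (u - v) + (χ u - χ v) • w := by
    intro u v; rw [hf, hf, sub_smul]; abel
  have hup : ∀ u v, dist (f u) (f v) ≤ 2 * dist u v := by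
    intro u v
    have h1 := hdiff u v
    rw [dist_eq_norm, hsub]
    have h2 := norm_add_le (u - v) ((χ u - χ v) • w)
    rw [← dist_eq_norm] at h2
    linarith [dist_nonneg (x := u) (y := v)]
  have hlo : ∀ u v, dist u v ≤ 2 * dist (f u) (f v) := by
    intro u v
    have h1 := hdiff u v
    have h2 := norm_sub_le (f u - f v) ((χ u - χ v) • w)
    have h3 : f u - f v - (χ u - χ v) • w = u - v := by rw [hsub, add_sub_cancel_right]
    rw [h3, ← dist_eq_norm, ← dist_eq_norm] at h2
    linarith [dist_nonneg (x := u) (y := v)]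
  have hinj : Function.Injective f := by
    intro u v huv
    have := hlo u v
    rw [huv, dist_self, mul_zero] at this
    exact dist_le_zero.1 this
  have hsurj : Function.Surjective f := by
    intro y
    have hc : Continuous fun s : ℝ => s + χ (y + s • w) :=
      continuous_id.add (hs.continuous.comp (by fun_prop))
    have hivt := intermediate_value_Icc (by norm_num : (-1 : ℝ) ≤ 0) hc.continuousOn
    obtain ⟨s, -, hs'⟩ := hivt (show (0 : ℝ) ∈ _ from
      ⟨by linarith [(h01 (y + (-1 : ℝ) • w)).2], by linarith [(h01 (y + (0 : ℝ) • w)).1]⟩)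
    refine ⟨y + s • w, ?_⟩
    rw [hf, add_assoc, ← add_smul]
    simp only at hs'
    rw [hs', zero_smul, add_zero]
  have hid : ∀ p, p ∉ Ureg → f p = p := by
    intro p hp; rw [hf, h0 p hp, zero_smul, add_zero]
  have hz : ∀ p, f p 2 = p 2 := by
    intro p; rw [hf]; simp [hw2]
  have hU : ∀ p ∈ Ureg, f p ∈ Ureg := by
    intro p hp
    by_contra hn
    have := hinj (hid _ hn)
    rw [this] at hn
    exact hn hp
  have hUP : ∀ p ∈ Ureg, -8 ≤ p 2 → p 2 ≤ 8 → p ∈ Pset 3 := by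
    intro p hp h1 h2
    exact mem_Pset_iff.2 ⟨by norm_num; exact hp.1.le, h1, h2⟩
  refine ⟨?_, ⟨?_, hinj.injOn, ?_⟩, hup, hlo, hid⟩
  · rw [hfun]
    exact contDiff_id.add (hs.smul contDiff_const)
  · intro p hp
    by_cases h : p ∈ Ureg
    · obtain ⟨-, h1, h2⟩ := mem_Pset_iff.1 hp
      exact hUP _ (hU p h) (by rwa [hz]) (by rwa [hz])
    · rw [hid p h]; exact hp
  · intro y hy
    obtain ⟨p, rfl⟩ := hsurj y
    refine ⟨p, ?_, rfl⟩
    by_cases h : p ∈ Ureg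
    · obtain ⟨-, h1, h2⟩ := mem_Pset_iff.1 hy
      rw [hz] at h1 h2
      exact hUP _ h h1 h2
    · rwa [hid p h] at hy

lemma iterate_contDiff {f : R3 → R3} (hf : ContDiff ℝ (⊤ : ℕ∞) f) (k : ℕ) :
    ContDiff ℝ (⊤ : ℕ∞) f^[k] := by
  induction k with
  | zero => exact contDiff_id
  | succ k ih => rw [Function.iterate_succ]; exact ih.comp hf

lemma iterate_dist {f : R3 → R3} (h1 : ∀ u v, dist (f u) (f v) ≤ 2 * dist u v)
    (h2 : ∀ u v, dist u v ≤ 2 * dist (f u) (f v)) (k : ℕ) (u v : R3) :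
    dist (f^[k] u) (f^[k] v) ≤ 2 ^ k * dist u v ∧ dist u v ≤ 2 ^ k * dist (f^[k] u) (f^[k] v) := by
  induction k with
  | zero => simp
  | succ k ih =>
    rw [Function.iterate_succ_apply', Function.iterate_succ_apply', pow_succ]
    have a := h1 (f^[k] u) (f^[k] v)
    have b := h2 (f^[k] u) (f^[k] v)
    have c : (0 : ℝ) < 2 ^ k := by positivity
    constructor
    · nlinarith [ih.1]
    · calc dist u v ≤ 2 ^ k * dist (f^[k] u) (f^[k] v) := ih.2
        _ ≤ 2 ^ k * (2 * dist (f (f^[k] u)) (f (f^[k] v))) := by gcongr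
        _ = _ := by ring

/-- Lemma `translation`.
Fix `C₁ > 1` and, for each positive integer `n`, let `f₁ = f₁(n)` be the time-1 map
constructed from the flow of the cut-off vector field (so `f₁(G) = G'` and
`N_n(G') := f₁(P(1/(100C₁n))) ⊆ N^hor_{1/(100n)}(G')`), and let `N_n(G'_{i,j})` be the
horizontal translate of `N_n(G')` by `(i/n, j/n, 0)`.  Then there is a constant `C₂ > 1`
independent of `n` such that for all integers `i, j ∈ [-n, n]` there is a smooth
`C₂`-bi-Lipschitz homeomorphism `f_{2,i,j} : P(3) → P(3)` restricting to the identity on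
`∂_ver P(3)`, mapping `G'` onto `G'_{i,j}` and `N_n(G')` onto `N_n(G'_{i,j})` (its
restriction to `N_n(G')` being the horizontal translation by `(i/n, j/n, 0)`). -/
theorem exists_translation_biLipschitz (C₁ : ℝ) (hC₁ : 1 < C₁)
    (f₁ : ℕ → R3 → R3)
    (hf₁G : ∀ n : ℕ, 0 < n → (f₁ n) '' Ggraph = Ggraph' n)
    (hf₁N : ∀ n : ℕ, 0 < n →
      (f₁ n) '' (Pset (1 / (100 * C₁ * (n : ℝ)))) ⊆ Nhor (1 / (100 * (n : ℝ))) (Ggraph' n)) :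
    ∃ C₂ : ℝ, 1 < C₂ ∧ ∀ n : ℕ, 0 < n → ∀ i j : ℤ, |i| ≤ (n : ℤ) → |j| ≤ (n : ℤ) →
      ∃ f₂ : R3 → R3,
        ContDiff ℝ (⊤ : ℕ∞) f₂ ∧
        Set.BijOn f₂ (Pset 3) (Pset 3) ∧
        (∀ u ∈ Pset 3, ∀ v ∈ Pset 3, dist (f₂ u) (f₂ v) ≤ C₂ * dist u v) ∧
        (∀ u ∈ Pset 3, ∀ v ∈ Pset 3, dist u v ≤ C₂ * dist (f₂ u) (f₂ v)) ∧
        (∀ p ∈ verBoundary, f₂ p = p) ∧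
        f₂ '' (Ggraph' n) = Gij n i j ∧
        (∀ p ∈ (f₁ n) '' (Pset (1 / (100 * C₁ * (n : ℝ)))),
          f₂ p = mk3 (p 0 + (i : ℝ) / (n : ℝ)) (p 1 + (j : ℝ) / (n : ℝ)) (p 2)) ∧
        f₂ '' ((f₁ n) '' (Pset (1 / (100 * C₁ * (n : ℝ))))) =
          translateH ((i : ℝ) / (n : ℝ)) ((j : ℝ) / (n : ℝ))
            ((f₁ n) '' (Pset (1 / (100 * C₁ * (n : ℝ))))) := by
  obtain ⟨χ, L, hs, hL, h0, h1, h01⟩ := exists_cutoff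
  obtain ⟨k, hk⟩ := exists_nat_gt (4 * (L : ℝ) + 1)
  have hkpos : (0 : ℝ) < k := by linarith [L.coe_nonneg]
  have hk0 : k ≠ 0 := by
    rintro rfl; simp at hkpos
  refine ⟨2 ^ k, one_lt_pow₀ (by norm_num) hk0, ?_⟩
  intro n hn i j hi hj
  have hn0 : (0 : ℝ) < n := by exact_mod_cast hn
  have ha : |(i : ℝ) / n| ≤ 1 := by
    rw [abs_div, abs_of_pos hn0, div_le_one hn0]; exact_mod_cast hi
  have hb : |(j : ℝ) / n| ≤ 1 := by
    rw [abs_div, abs_of_pos hn0, div_le_one hn0]; exact_mod_cast hj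
  generalize haa : (i : ℝ) / n = a at *
  generalize hbb : (j : ℝ) / n = b at *
  set w : R3 := mk3 (a / k) (b / k) 0 with hwdef
  have hwn : ‖w‖ ≤ 2 / k := by
    rw [EuclideanSpace.norm_eq, Real.sqrt_le_left (by positivity)]
    simp only [Fin.sum_univ_three, Real.norm_eq_abs, sq_abs, hwdef, mk3_0, mk3_1, mk3_2]
    have ha2 : a ^ 2 ≤ 1 := by rw [← sq_abs]; exact pow_le_one₀ (abs_nonneg _) ha
    have hb2 : b ^ 2 ≤ 1 := by rw [← sq_abs]; exact pow_le_one₀ (abs_nonneg _) hb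
    rw [div_pow, div_pow, div_pow, ← add_div, zero_pow two_ne_zero, add_zero]
    gcongr
    linarith
  have hwL : L * ‖w‖ ≤ 1 / 2 := by
    calc (L : ℝ) * ‖w‖ ≤ L * (2 / k) := by gcongr
      _ = (2 * L) / k := by ring
      _ ≤ 1 / 2 := by rw [div_le_iff₀ hkpos]; linarith
  obtain ⟨f, hf⟩ : ∃ f : R3 → R3, ∀ p, f p = p + χ p • w := ⟨_, fun _ => rfl⟩
  obtain ⟨c1, c2, c3, c4, c5⟩ := step_props hs hL h0 h01 (w := w) rfl hwL hf
  have htr : ∀ p ∈ Nhor (1 / (100 * (n : ℝ))) (Ggraph' n), ∀ m : ℕ, m ≤ k →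
      f^[m] p = p + mk3 (m * (a / k)) (m * (b / k)) 0 := by
    intro p hp m
    induction m with
    | zero =>
      intro _
      apply R3_ext <;> simp
    | succ m ih =>
      intro hm
      have hmk : (m : ℝ) ≤ k := by exact_mod_cast (Nat.le_of_succ_le hm)
      have hfrac : |(m : ℝ) / k| ≤ 1 := by
        rw [abs_of_nonneg (by positivity), div_le_one hkpos]; exact hmk
      rw [Function.iterate_succ_apply', ih (Nat.le_of_succ_le hm), hf, h1, one_smul]
      · apply R3_ext <;> simp [hwdef] <;> ring
      · apply translate_mem_Kreg hn hp
        · rw [show (m : ℝ) * (a / k) = (m / k) * a by ring, abs_mul]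
          exact mul_le_one₀ hfrac (abs_nonneg _) ha
        · rw [show (m : ℝ) * (b / k) = (m / k) * b by ring, abs_mul]
          exact mul_le_one₀ hfrac (abs_nonneg _) hb
  have htrans : ∀ p ∈ (f₁ n) '' (Pset (1 / (100 * C₁ * (n : ℝ)))),
      f^[k] p = mk3 (p 0 + a) (p 1 + b) (p 2) := by
    intro p hp
    rw [htr p (hf₁N n hn hp) k le_rfl]
    apply R3_ext <;> simp <;> field_simp
  have himg : ∀ S ⊆ (f₁ n) '' (Pset (1 / (100 * C₁ * (n : ℝ)))),
      f^[k] '' S = translateH a b S := by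
    intro S hS
    ext q
    constructor
    · rintro ⟨p, hp, rfl⟩
      refine ⟨p, hp, ?_⟩
      rw [htrans p (hS hp)]
      simp
    · rintro ⟨p, hp, e0, e1, e2⟩
      refine ⟨p, hp, ?_⟩
      rw [htrans p (hS hp)]
      apply R3_ext <;> simp [e0, e1, e2]
  have hGsub : Ggraph' n ⊆ (f₁ n) '' (Pset (1 / (100 * C₁ * (n : ℝ)))) := by
    rw [← hf₁G n hn]
    apply Set.image_mono
    rintro p (⟨h0, h1, h2, h3⟩ | ⟨ε, hε, h0, h1, h2, h3⟩)
    · exact Or.inl ⟨by rw [h0, h1]; simp only [ne_eq, OfNat.ofNat_ne_zero, not_false_eq_true, zero_pow, add_zero]; positivity, h2, h3⟩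
    · rcases hε with rfl | rfl
      · exact Or.inr (Or.inr ⟨by rw [h0, h1]; ring_nf; positivity, h2, h3⟩)
      · exact Or.inr (Or.inl ⟨by rw [h0, h1]; ring_nf; positivity, h2, h3⟩)
  refine ⟨f^[k], iterate_contDiff c1 k, c2.iterate k, fun u _ v _ => (iterate_dist c3 c4 k u v).1,
    fun u _ v _ => (iterate_dist c3 c4 k u v).2, ?_, ?_, htrans, himg _ subset_rfl⟩
  · intro p hp
    exact Function.iterate_fixed (c5 p (Ureg_inter_verBoundary hp)) k
  · rw [himg _ hGsub, Gij, haa, hbb]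

end
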